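/- Let v ≡ 5 (mod 6) and let (V,B) be a PBD(v,{3,5*}) whose unique block of size 5 is {a,b,c,d,e}. Then the system obtained by deleting the block {a,b,c,d,e} from B and adding the two triples {a,c,e} and {b,d,e} is a maximum partial triple system MMPTS(v) of Type-Q whose leave is the 4-cycle {a,b},{b,c},{c,d},{d,a}. -/

import Mathlib

def isPTS {n : ℕ} (B : Finset (Finset (Fin n))) : Prop :=
  (∀ T ∈ B, T.card = 3) ∧
  ∀ p : Finset (Fin n), p.card = 2 → ∀ T₁ ∈ B, ∀ T₂ ∈ B, p ⊆ T₁ → p ⊆ T₂ → T₁ = T₂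

def isMMPTS {n : ℕ} (B : Finset (Finset (Fin n))) : Prop :=
  isPTS B ∧ ∀ B' : Finset (Finset (Fin n)), isPTS B' → B'.card ≤ B.card

def leave {n : ℕ} (B : Finset (Finset (Fin n))) : Set (Finset (Fin n)) :=
  {p | p.card = 2 ∧ ∀ T ∈ B, ¬ p ⊆ T}

def isTypeQ {n : ℕ} (B : Finset (Finset (Fin n))) : Prop :=
  ∃ a b c d : Fin n, a ≠ b ∧ a ≠ c ∧ a ≠ d ∧ b ≠ c ∧ b ≠ d ∧ c ≠ d ∧
    leave B = {{a, b}, {b, c}, {c, d}, {d, a}} ∧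
    ∃ e : Fin n, ({a, c, e} : Finset (Fin n)) ∈ B ∧ ({b, d, e} : Finset (Fin n)) ∈ B

def isPBD35 {n : ℕ} (B : Finset (Finset (Fin n))) : Prop :=
  (∀ T ∈ B, T.card = 3 ∨ T.card = 5) ∧
  (B.filter fun T => T.card = 5).card = 1 ∧
  ∀ p : Finset (Fin n), p.card = 2 → ∃! T : Finset (Fin n), T ∈ B ∧ p ⊆ T

/-!
In a partial triple system on `n` points with `n` odd, every point lies on an even number of leave
pairs, so the leave is never a single pair. The pairs outside the leave number three per triple, and
`n.choose 2 ≡ 1 (mod 3)` when `n ≡ 2 (mod 3)`, so the leave then has `1 (mod 3)` pairs. Hence it has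
at least four if `n ≡ 5 (mod 6)`, and a system whose leave has at most four pairs is maximum.

If a block `S ∪ T` of a pairwise balanced design is replaced by `S` and `T`, the pairs that become
uncovered are those joining `S \ T` to `T \ S`. For `S = {a, c, e}` and `T = {b, d, e}` they form
the complete bipartite graph between `{a, c}` and `{b, d}`, which is the required 4-cycle.
-/

section

open Finset

variable {n : ℕ} {B Q : Finset (Finset (Fin n))} {F S T : Finset (Fin n)}

theorem leave_eq_coe_sdiff (B : Finset (Finset (Fin n))) :
    leave B = ↑(powersetCard 2 univ \ B.biUnion (powersetCard 2)) := by
  ext p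
  simp only [leave, Set.mem_ofPred_eq, mem_coe, mem_sdiff, mem_biUnion, mem_powersetCard,
    subset_univ, true_and, not_exists, not_and]
  grind

theorem isPTS.pairwiseDisjoint_powersetCard_two (hB : isPTS B) :
    (B : Set (Finset (Fin n))).PairwiseDisjoint (powersetCard 2) := by
  intro S hS T hT hST
  refine disjoint_left.2 fun p hpS hpT ↦ hST ?_
  rw [mem_powersetCard] at hpS hpT
  exact hB.2 p hpS.2 S hS T hT hpS.1 hpT.1

theorem isPTS.three_mul_card_add_ncard_leave (hB : isPTS B) :
    3 * #B + (leave B).ncard = n.choose 2 := by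
  have hcovered : #(B.biUnion (powersetCard 2)) = 3 * #B := by
    rw [card_biUnion hB.pairwiseDisjoint_powersetCard_two, mul_comm]
    exact sum_const_nat fun T hT ↦ by rw [card_powersetCard, hB.1 T hT]; rfl
  have hsub : B.biUnion (powersetCard 2) ⊆ powersetCard 2 univ :=
    biUnion_subset.2 fun T _ ↦ powersetCard_mono (subset_univ T)
  rw [leave_eq_coe_sdiff, Set.ncard_coe_finset, ← hcovered, add_comm,
    card_sdiff_add_card_eq_card hsub, card_powersetCard, card_univ, Fintype.card_fin]

theorem setOf_pair_mem_leave_eq_coe_sdiff (B : Finset (Finset (Fin n))) (x : Fin n) :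
    {y | {x, y} ∈ leave B} = ↑(univ.erase x \ {T ∈ B | x ∈ T}.biUnion (·.erase x)) := by
  ext y
  simp only [leave, Set.mem_ofPred_eq, card_pair_eq_two_iff, insert_subset_iff,
    singleton_subset_iff, mem_coe, mem_sdiff, mem_erase, mem_univ, mem_biUnion, mem_filter]
  grind

theorem isPTS.pairwiseDisjoint_erase (hB : isPTS B) (x : Fin n) :
    (({T ∈ B | x ∈ T} : Finset _) : Set (Finset (Fin n))).PairwiseDisjoint (·.erase x) := by
  intro S hS T hT hST
  obtain ⟨hSB, hxS⟩ := mem_filter.1 hS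
  obtain ⟨hTB, hxT⟩ := mem_filter.1 hT
  refine disjoint_left.2 fun y hyS hyT ↦ hST ?_
  rw [mem_erase] at hyS hyT
  exact hB.2 {x, y} (card_pair hyS.1.symm) S hSB T hTB
    (insert_subset hxS (singleton_subset_iff.2 hyS.2))
    (insert_subset hxT (singleton_subset_iff.2 hyT.2))

theorem isPTS.two_mul_card_filter_mem_add_ncard (hB : isPTS B) (x : Fin n) :
    2 * #{T ∈ B | x ∈ T} + {y | {x, y} ∈ leave B}.ncard = n - 1 := by
  have hcovered : #({T ∈ B | x ∈ T}.biUnion (·.erase x)) = 2 * #{T ∈ B | x ∈ T} := by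
    rw [card_biUnion (hB.pairwiseDisjoint_erase x), mul_comm]
    refine sum_const_nat fun T hT ↦ ?_
    obtain ⟨hTB, hxT⟩ := mem_filter.1 hT
    rw [card_erase_of_mem hxT, hB.1 T hTB]
  have hsub : {T ∈ B | x ∈ T}.biUnion (·.erase x) ⊆ univ.erase x :=
    biUnion_subset.2 fun T _ ↦ erase_subset_erase x (subset_univ T)
  rw [setOf_pair_mem_leave_eq_coe_sdiff, Set.ncard_coe_finset, ← hcovered, add_comm,
    card_sdiff_add_card_eq_card hsub, card_erase_of_mem (mem_univ x), card_univ, Fintype.card_fin]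

theorem isPTS.even_ncard_setOf_pair_mem_leave (hB : isPTS B) (hn : Odd n) (x : Fin n) :
    Even {y | {x, y} ∈ leave B}.ncard := by
  have hsum := hB.two_mul_card_filter_mem_add_ncard x
  grind

theorem isPTS.ncard_leave_ne_one (hB : isPTS B) (hn : Odd n) : (leave B).ncard ≠ 1 := by
  intro hone
  obtain ⟨p, hleave⟩ := Set.ncard_eq_one.1 hone
  have hp : p ∈ leave B := hleave ▸ Set.mem_singleton p
  obtain ⟨x, y, hxy, rfl⟩ := card_eq_two.1 hp.1
  have hneighbors : {z | {x, z} ∈ leave B} = {y} := by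
    ext z
    rw [hleave, Set.mem_ofPred_eq, Set.mem_singleton_iff, Set.mem_singleton_iff]
    refine ⟨fun h ↦ ?_, fun h ↦ h ▸ rfl⟩
    have hy : y ∈ ({x, z} : Finset (Fin n)) := h ▸ mem_insert_of_mem (mem_singleton_self y)
    exact (mem_singleton.1 (mem_of_mem_insert_of_ne hy hxy.symm)).symm
  have heven := hB.even_ncard_setOf_pair_mem_leave hn x
  rw [hneighbors, Set.ncard_singleton] at heven
  exact Nat.not_even_one heven

theorem choose_two_modEq_one_of_modEq_two (hn : n ≡ 2 [MOD 3]) : n.choose 2 ≡ 1 [MOD 3] := by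
  have lucas := Choose.choose_modEq_choose_mod_mul_choose_div_nat (n := n) (k := 2) (p := 3)
  simpa [show n % 3 = 2 from hn] using lucas

theorem isPTS.four_le_ncard_leave (hB : isPTS B) (hn : n % 6 = 5) : 4 ≤ (leave B).ncard := by
  have hcount := hB.three_mul_card_add_ncard_leave
  have hchoose : n.choose 2 % 3 = 1 := choose_two_modEq_one_of_modEq_two (show n % 3 = 2 by lia)
  have hne := hB.ncard_leave_ne_one (Nat.odd_iff.2 (by lia))
  lia

theorem isPTS.isMMPTS_of_ncard_leave_le_four (hB : isPTS B) (hn : n % 6 = 5)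
    (hleave : (leave B).ncard ≤ 4) : isMMPTS B := by
  refine ⟨hB, fun B' hB' ↦ ?_⟩
  have hcount := hB.three_mul_card_add_ncard_leave
  have hcount' := hB'.three_mul_card_add_ncard_leave
  have hleave' := hB'.four_le_ncard_leave hn
  lia

theorem isPTS_pair (hS : #S = 3) (hT : #T = 3) (hST : #(S ∩ T) ≤ 1) : isPTS {S, T} := by
  have hinter (p : Finset (Fin n)) (hp : #p = 2) (hpS : p ⊆ S) (hpT : p ⊆ T) : S = T := by
    have := card_le_card (subset_inter hpS hpT)
    lia
  simp only [isPTS, mem_insert, mem_singleton]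
  refine ⟨by rintro _ (rfl | rfl) <;> assumption, ?_⟩
  rintro p hp _ (rfl | rfl) _ (rfl | rfl) h₁ h₂
  · rfl
  · exact hinter p hp h₁ h₂
  · exact (hinter p hp h₂ h₁).symm
  · rfl

/-- A pairwise balanced design, with no restriction on the block sizes: every pair of points lies
in exactly one block. -/
def isPairwiseBalanced (B : Finset (Finset (Fin n))) : Prop :=
  ∀ p : Finset (Fin n), #p = 2 → ∃! T : Finset (Fin n), T ∈ B ∧ p ⊆ T

theorem isPairwiseBalanced.eq_of_subset_of_subset (hB : isPairwiseBalanced B)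
    {p : Finset (Fin n)} (hp : #p = 2) (hS : S ∈ B) (hT : T ∈ B) (hpS : p ⊆ S) (hpT : p ⊆ T) :
    S = T :=
  (hB p hp).unique ⟨hS, hpS⟩ ⟨hT, hpT⟩

theorem isPairwiseBalanced.isPTS_union_erase (hB : isPairwiseBalanced B) (hF : F ∈ B)
    (hcard : ∀ T ∈ B.erase F, #T = 3) (hQ : isPTS Q) (hQF : ∀ T ∈ Q, T ⊆ F) :
    isPTS (Q ∪ B.erase F) := by
  have hcross (p : Finset (Fin n)) (hp : #p = 2) (S : Finset (Fin n)) (hS : S ∈ Q)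
      (T : Finset (Fin n)) (hT : T ∈ B.erase F) (hpS : p ⊆ S) : ¬ p ⊆ T := fun hpT ↦
    ne_of_mem_erase hT
      (hB.eq_of_subset_of_subset hp (mem_of_mem_erase hT) hF hpT (hpS.trans (hQF S hS)))
  refine ⟨fun T hT ↦ (mem_union.1 hT).elim (hQ.1 T) (hcard T), fun p hp S hS T hT hpS hpT ↦ ?_⟩
  rcases mem_union.1 hS with hS | hS <;> rcases mem_union.1 hT with hT | hT
  · exact hQ.2 p hp S hS T hT hpS hpT
  · exact absurd hpT (hcross p hp S hS T hT hpS)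
  · exact absurd hpS (hcross p hp T hT S hS hpT)
  · exact hB.eq_of_subset_of_subset hp (mem_of_mem_erase hS) (mem_of_mem_erase hT) hpS hpT

theorem isPairwiseBalanced.leave_union_erase (hB : isPairwiseBalanced B) (hF : F ∈ B) :
    leave (Q ∪ B.erase F) = {p ∈ leave Q | p ⊆ F} := by
  ext p
  constructor
  · rintro ⟨hp, huncovered⟩
    obtain ⟨T, ⟨hT, hpT⟩, -⟩ := hB p hp
    have hTF : T = F := by
      by_contra hne
      exact huncovered T (mem_union_right Q (mem_erase.2 ⟨hne, hT⟩)) hpT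
    exact ⟨⟨hp, fun T hT ↦ huncovered T (mem_union_left _ hT)⟩, hTF ▸ hpT⟩
  · rintro ⟨⟨hp, huncovered⟩, hpF⟩
    refine ⟨hp, fun T hT hpT ↦ ?_⟩
    rcases mem_union.1 hT with hT | hT
    · exact huncovered T hT hpT
    · exact ne_of_mem_erase hT
        (hB.eq_of_subset_of_subset hp (mem_of_mem_erase hT) hF hpT hpF)

/-- The pairs joining a point of `S \ T` to a point of `T \ S`, i.e. the edges of the complete
bipartite graph between these two sets. -/
def crossPairs {α : Type*} [DecidableEq α] (S T : Finset α) : Finset (Finset α) :=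
  image₂ (fun x y ↦ {x, y}) (S \ T) (T \ S)

theorem card_crossPairs_le {α : Type*} [DecidableEq α] (S T : Finset α) :
    #(crossPairs S T) ≤ #(S \ T) * #(T \ S) :=
  card_image₂_le _ _ _

theorem crossPairs_eq_of_sdiff_eq_pair {α : Type*} [DecidableEq α] {S T : Finset α} {a b c d : α}
    (hST : S \ T = {a, c}) (hTS : T \ S = {b, d}) :
    crossPairs S T = {{a, b}, {b, c}, {c, d}, {d, a}} := by
  simp only [crossPairs, hST, hTS, image₂_insert_left, image₂_singleton_left, image_insert,
    image_singleton, pair_comm c b, pair_comm a d]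
  grind

theorem sep_leave_pair_subset_union (S T : Finset (Fin n)) :
    {p ∈ leave {S, T} | p ⊆ S ∪ T} = crossPairs S T := by
  ext p
  simp only [leave, Set.mem_ofPred_eq, mem_insert, mem_singleton, forall_eq_or_imp, forall_eq,
    crossPairs, mem_coe, mem_image₂, mem_sdiff]
  constructor
  · rintro ⟨⟨hp, hpS, hpT⟩, hpST⟩
    obtain ⟨y, hyp, hyS⟩ := not_subset.1 hpS
    obtain ⟨x, hxp, hxT⟩ := not_subset.1 hpT
    have hxS : x ∈ S := (mem_union.1 (hpST hxp)).resolve_right hxT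
    have hyT : y ∈ T := (mem_union.1 (hpST hyp)).resolve_left hyS
    have hxy : x ≠ y := ne_of_mem_of_not_mem hxS hyS
    exact ⟨x, ⟨hxS, hxT⟩, y, ⟨hyT, hyS⟩,
      eq_of_subset_of_card_le (insert_subset hxp (singleton_subset_iff.2 hyp))
        (by rw [hp, card_pair hxy])⟩
  · rintro ⟨x, ⟨hxS, hxT⟩, y, ⟨hyT, hyS⟩, rfl⟩
    simp only [insert_subset_iff, singleton_subset_iff, mem_union]
    exact ⟨⟨card_pair (ne_of_mem_of_not_mem hxS hyS), fun h ↦ hyS h.2, fun h ↦ hxT h.1⟩,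
      .inl hxS, .inr hyT⟩

theorem isPairwiseBalanced.leave_insert_insert_erase_union (hB : isPairwiseBalanced B)
    (hST : S ∪ T ∈ B) :
    leave (insert S (insert T (B.erase (S ∪ T)))) = crossPairs S T := by
  rw [← sep_leave_pair_subset_union, ← hB.leave_union_erase hST, insert_union, singleton_union]

theorem isPBD35.isPairwiseBalanced (hB : isPBD35 B) : isPairwiseBalanced B := hB.2.2

theorem isPBD35.card_eq_three_of_mem_erase (hB : isPBD35 B) (hF : F ∈ B) (hF5 : #F = 5)
    (hT : T ∈ B.erase F) : #T = 3 := by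
  obtain ⟨hTF, hTB⟩ := mem_erase.1 hT
  refine (hB.1 T hTB).resolve_right fun hT5 ↦ hTF ?_
  exact card_le_one.1 hB.2.1.le T (mem_filter.2 ⟨hTB, hT5⟩) F (mem_filter.2 ⟨hF, hF5⟩)

theorem isPBD35.isPTS_insert_insert_erase_union (hB : isPBD35 B) (hST : S ∪ T ∈ B)
    (hST5 : #(S ∪ T) = 5) (hS : #S = 3) (hT : #T = 3) :
    isPTS (insert S (insert T (B.erase (S ∪ T)))) := by
  have hinter : #(S ∩ T) ≤ 1 := by
    have := card_union_add_card_inter S T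
    lia
  have hsub : ∀ U ∈ ({S, T} : Finset (Finset (Fin n))), U ⊆ S ∪ T := by
    simp [subset_union_left, subset_union_right]
  rw [← singleton_union T, ← insert_union]
  exact hB.isPairwiseBalanced.isPTS_union_erase hST
    (fun U hU ↦ hB.card_eq_three_of_mem_erase hST hST5 hU) (isPTS_pair hS hT hinter) hsub

theorem isPBD35.isMMPTS_insert_insert_erase_union (hB : isPBD35 B) (hn : n % 6 = 5)
    (hST : S ∪ T ∈ B) (hST5 : #(S ∪ T) = 5) (hS : #S = 3) (hT : #T = 3) :
    isMMPTS (insert S (insert T (B.erase (S ∪ T)))) := by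
  have hST_sdiff : #(S \ T) = 2 := by
    have := card_sdiff_add_card S T
    lia
  have hTS_sdiff : #(T \ S) = 2 := by
    have := card_sdiff_add_card T S
    rw [union_comm] at this
    lia
  refine (hB.isPTS_insert_insert_erase_union hST hST5 hS hT).isMMPTS_of_ncard_leave_le_four hn ?_
  calc (leave (insert S (insert T (B.erase (S ∪ T))))).ncard
      = #(crossPairs S T) := by
        rw [hB.isPairwiseBalanced.leave_insert_insert_erase_union hST, Set.ncard_coe_finset]
    _ ≤ #(S \ T) * #(T \ S) := card_crossPairs_le S T
    _ = 4 := by rw [hST_sdiff, hTS_sdiff]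

end

theorem pbd_to_mmpts_typeQ (n : ℕ) (hn : n % 6 = 5)
    (B : Finset (Finset (Fin n))) (hB : isPBD35 B) (a b c d e : Fin n)
    (hdist : ({a, b, c, d, e} : Finset (Fin n)).card = 5)
    (hmem : ({a, b, c, d, e} : Finset (Fin n)) ∈ B) :
    isMMPTS (insert {a, c, e} (insert {b, d, e} (B.erase {a, b, c, d, e}))) ∧
    isTypeQ (insert {a, c, e} (insert {b, d, e} (B.erase {a, b, c, d, e}))) ∧
    leave (insert {a, c, e} (insert {b, d, e} (B.erase {a, b, c, d, e}))) =
      {{a, b}, {b, c}, {c, d}, {d, a}} := by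
  have hnodup : ({a, b, c, d, e} : Multiset (Fin n)).Nodup :=
    Multiset.toFinset_card_eq_card_iff_nodup.1 (by simpa using hdist)
  obtain ⟨⟨hab, hac, had, hae⟩, ⟨hbc, hbd, hbe⟩, ⟨hcd, hce⟩, hde⟩ :
      (a ≠ b ∧ a ≠ c ∧ a ≠ d ∧ a ≠ e) ∧ (b ≠ c ∧ b ≠ d ∧ b ≠ e) ∧ (c ≠ d ∧ c ≠ e) ∧ d ≠ e := by
    simpa using hnodup
  have hunion : ({a, b, c, d, e} : Finset (Fin n)) = {a, c, e} ∪ {b, d, e} := by grind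
  have hace_sdiff : ({a, c, e} \ {b, d, e} : Finset (Fin n)) = {a, c} := by grind
  have hbde_sdiff : ({b, d, e} \ {a, c, e} : Finset (Fin n)) = {b, d} := by grind
  rw [hunion] at hdist hmem ⊢
  have hleave : leave (insert {a, c, e} (insert {b, d, e} (B.erase ({a, c, e} ∪ {b, d, e})))) =
      {{a, b}, {b, c}, {c, d}, {d, a}} := by
    rw [hB.isPairwiseBalanced.leave_insert_insert_erase_union hmem,
      crossPairs_eq_of_sdiff_eq_pair hace_sdiff hbde_sdiff]
    simp
  exact ⟨hB.isMMPTS_insert_insert_erase_union hn hmem hdist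
      (Finset.card_eq_three.2 ⟨a, c, e, hac, hae, hce, rfl⟩)
      (Finset.card_eq_three.2 ⟨b, d, e, hbd, hbe, hde, rfl⟩),
    ⟨a, b, c, d, hab, hac, had, hbc, hbd, hcd, hleave, e, by simp, by simp⟩, hleave⟩
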